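/- arXiv:2511.23152 — 3 statements merged into one kernel-verified Lean document; each statement's English description precedes it below -/
import Mathlib

section
/- Let (Q,∘) be a finite loop with identity e admitting a unitary collinear factorization Θ = (A,B,C). Then there exist unitary matrices U, V, W ∈ Matrix n n ℂ such that the gauge-transformed slices A'_g = U·A_g·Vᴴ, B'_g = V·B_g·Wᴴ, C'_g = W·C_g·Uᴴ satisfy the synchronized condition A'_g = B'_g = (C'_g)ᴴ for every g ∈ Q. In particular one may take (U, V, W) = (A_eᴴ, I_n, B_e). -/
open Matrix BigOperators

/-- Model tensor: T_{abc}(Θ) = (1/n)·Tr(A_a·B_b·C_c). -/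
noncomputable def Tmod {Q : Type*} [Fintype Q] (A B C : Q → Matrix Q Q ℂ) (a b c : Q) : ℂ :=
  (1 / (Fintype.card Q : ℂ)) * Matrix.trace (A a * B b * C c)

/-!
Both identity laws enter through the collinearity relation: the supported triples `(e, g, g)` and
`(g, e, g)` give `A e * B g = (C g)ᴴ = A g * B e`. Cancelling the unitaries `A e` and `B e` turns
the outer equality into `(A e)ᴴ * A g = B g * (B e)ᴴ` and the right-hand one into
`(A e)ᴴ * A g = (B e * C g * A e)ᴴ`.
-/

section StarMonoid

variable {R : Type*} [Monoid R] [StarMul R] {u v : R}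

theorem star_mul_eq_mul_star_iff_of_mem_unitary (hu : u ∈ unitary R) (hv : v ∈ unitary R)
    {a b : R} : star u * a = b * star v ↔ a * v = u * b :=
  calc star u * a = b * star v
    _ ↔ a = u * (b * star v) := (Unitary.toUnits ⟨u, hu⟩).inv_mul_eq_iff_eq_mul
    _ ↔ a = u * b * star v := by rw [mul_assoc]
    _ ↔ a * v = u * b := (Unitary.toUnits ⟨v, hv⟩).eq_mul_inv_iff_mul_eq

theorem star_mul_eq_star_mul_mul_iff_of_mem_unitary (hu : u ∈ unitary R) (hv : v ∈ unitary R)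
    {a c : R} : star u * a = star (v * c * u) ↔ a * v = star c := by
  have hstar : star (v * c * u) = star u * star c * star v := by
    simp only [star_mul, mul_assoc]
  rw [hstar, star_mul_eq_mul_star_iff_of_mem_unitary hu hv, ← mul_assoc,
    Unitary.mul_star_self_of_mem hu, one_mul]

theorem stmt5_general {Q : Type*} (op : Q → Q → Q) (e : Q) (he : ∀ x, op e x = x ∧ op x e = x)
    (A B C : Q → R) (hA : A e ∈ unitary R) (hB : B e ∈ unitary R)
    (hCol : ∀ a b c, op a b = c → A a * B b = star (C c)) :
    ∃ U V W : R, U ∈ unitary R ∧ V ∈ unitary R ∧ W ∈ unitary R ∧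
      (∀ g, U * A g * star V = V * B g * star W ∧ U * A g * star V = star (W * C g * star U)) ∧
      U = star (A e) ∧ V = 1 ∧ W = B e := by
  refine ⟨star (A e), 1, B e, Unitary.star_mem hA, one_mem _, hB, fun g => ?_, rfl, rfl, rfl⟩
  have hleft : A e * B g = star (C g) := hCol e g g (he g).1
  have hright : A g * B e = star (C g) := hCol g e g (he g).2
  rw [star_one, mul_one, one_mul, star_star]
  exact ⟨(star_mul_eq_mul_star_iff_of_mem_unitary hA hB).2 (hright.trans hleft.symm),
    (star_mul_eq_star_mul_mul_iff_of_mem_unitary hA hB).2 hright⟩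

end StarMonoid

/-- synchronization lemma for loops admitting a unitary collinear
factorization.  One may take the unitary gauge (U, V, W) = (A_eᴴ, I, B_e), under
which A'_g = B'_g = (C'_g)ᴴ for every g. -/
theorem stmt5 {Q : Type*} [Fintype Q] [DecidableEq Q] [Nonempty Q]
    (op : Q → Q → Q)
    (hL : ∀ a : Q, Function.Bijective fun x => op a x)
    (hR : ∀ b : Q, Function.Bijective fun x => op x b)
    (e : Q) (he : ∀ x, op e x = x ∧ op x e = x)
    (A B C : Q → Matrix Q Q ℂ)
    (hAu : ∀ a, A a ∈ Matrix.unitaryGroup Q ℂ)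
    (hBu : ∀ b, B b ∈ Matrix.unitaryGroup Q ℂ)
    (hCu : ∀ c, C c ∈ Matrix.unitaryGroup Q ℂ)
    (hT : ∀ a b c, Tmod A B C a b c = if op a b = c then 1 else 0)
    (hCol : ∀ a b c, op a b = c → A a * B b = (C c)ᴴ) :
    ∃ U V W : Matrix Q Q ℂ,
      U ∈ Matrix.unitaryGroup Q ℂ ∧ V ∈ Matrix.unitaryGroup Q ℂ ∧
      W ∈ Matrix.unitaryGroup Q ℂ ∧
      (∀ g, U * A g * Vᴴ = V * B g * Wᴴ ∧ U * A g * Vᴴ = (W * C g * Uᴴ)ᴴ) ∧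
      U = (A e)ᴴ ∧ V = 1 ∧ W = B e :=
  stmt5_general op e he A B C (hAu e) (hBu e) hCol
end

section
/- Let (Q,∘) be a finite loop with identity e and let ρ : Q → Matrix n n ℂ be a map with unitary values such that the synchronized factorization Θ with slices A_g = B_g = ρ(g) and C_g = ρ(g)ᴴ is a unitary collinear factorization for (Q,∘). Then the character of ρ coincides with that of the left-regular representation: Tr(ρ(g)) = n if g = e and Tr(ρ(g)) = 0 otherwise. Moreover, ρ is injective. -/
open Matrix BigOperators

section General

variable {Q m R : Type*} [DecidableEq Q] [Fintype m] [CommRing R] [StarRing R]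

/-- The slices `ρ`, `ρ`, `ρᴴ` factorize the Cayley tensor of `op`. The factor `1 / n` of the model
tensor is cleared to the right-hand side, so that `R` may be any commutative star ring, and the size
`m` of the slices is independent of the index set `Q`. -/
def IsSynchronizedFactorization (op : Q → Q → Q) (ρ : Q → Matrix m m R) : Prop :=
  ∀ a b c, trace (ρ a * ρ b * (ρ c)ᴴ) = if op a b = c then (Fintype.card m : R) else 0

namespace IsSynchronizedFactorization

variable {op : Q → Q → Q} {ρ : Q → Matrix m m R}

theorem trace_eq_of_mem_unitaryGroup [DecidableEq m] (h : IsSynchronizedFactorization op ρ)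
    {b : Q} (hb : ρ b ∈ unitaryGroup m R) (a : Q) :
    trace (ρ a) = if op a b = b then (Fintype.card m : R) else 0 := by
  have hbb : ρ b * (ρ b)ᴴ = 1 := mem_unitaryGroup_iff.mp hb
  calc trace (ρ a) = trace (ρ a * ρ b * (ρ b)ᴴ) := by rw [mul_assoc, hbb, mul_one]
    _ = if op a b = b then (Fintype.card m : R) else 0 := h a b b

theorem injective (h : IsSynchronizedFactorization op ρ) (hm : (Fintype.card m : R) ≠ 0)
    {a : Q} (ha : Function.Injective (op a)) : Function.Injective ρ := by
  intro g k hgk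
  have hentry : (if op a k = op a g then (Fintype.card m : R) else 0) = Fintype.card m :=
    calc _ = trace (ρ a * ρ k * (ρ (op a g))ᴴ) := (h a k (op a g)).symm
      _ = trace (ρ a * ρ g * (ρ (op a g))ᴴ) := by rw [hgk]
      _ = Fintype.card m := by rw [h a g (op a g), if_pos rfl]
  by_contra hne
  rw [if_neg fun hop => hne (ha hop).symm] at hentry
  exact hm hentry.symm

end IsSynchronizedFactorization

theorem stmt7_general [DecidableEq m] (hm : (Fintype.card m : R) ≠ 0) {op : Q → Q → Q} {e : Q}
    (he : ∀ x, op e x = x ∧ op x e = x) {ρ : Q → Matrix m m R} (hρe : ρ e ∈ unitaryGroup m R)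
    (h : IsSynchronizedFactorization op ρ) :
    (∀ g, trace (ρ g) = if g = e then (Fintype.card m : R) else 0) ∧ Function.Injective ρ := by
  have he_inj : Function.Injective (op e) := fun x y hxy => by rwa [(he x).1, (he y).1] at hxy
  exact ⟨fun g => by rw [h.trace_eq_of_mem_unitaryGroup hρe, (he g).2], h.injective hm he_inj⟩

end General

theorem isSynchronizedFactorization_iff_Tmod {Q : Type*} [Fintype Q] [DecidableEq Q] [Nonempty Q]
    {op : Q → Q → Q} {ρ : Q → Matrix Q Q ℂ} :
    IsSynchronizedFactorization op ρ ↔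
      ∀ a b c, Tmod ρ ρ (fun g => (ρ g)ᴴ) a b c = if op a b = c then 1 else 0 := by
  have hn : (Fintype.card Q : ℂ) ≠ 0 := Nat.cast_ne_zero.mpr Fintype.card_ne_zero
  simp only [IsSynchronizedFactorization, Tmod, one_div, inv_mul_eq_iff_eq_mul₀ hn, mul_ite,
    mul_one, mul_zero]

/-- for a synchronized unitary collinear factorization of a loop,
the character of ρ coincides with that of the regular representation
(Tr ρ(g) = n if g = e, else 0), and ρ is injective. -/
theorem stmt7 {Q : Type*} [Fintype Q] [DecidableEq Q] [Nonempty Q]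
    (op : Q → Q → Q)
    (hL : ∀ a : Q, Function.Bijective fun x => op a x)
    (hR : ∀ b : Q, Function.Bijective fun x => op x b)
    (e : Q) (he : ∀ x, op e x = x ∧ op x e = x)
    (ρ : Q → Matrix Q Q ℂ)
    (hρu : ∀ g, ρ g ∈ Matrix.unitaryGroup Q ℂ)
    (hT : ∀ a b c, Tmod (fun g => ρ g) (fun g => ρ g) (fun g => (ρ g)ᴴ) a b c =
      if op a b = c then 1 else 0)
    (hCol : ∀ a b c, op a b = c → ρ a * ρ b = ((ρ c)ᴴ)ᴴ) :
    (∀ g, Matrix.trace (ρ g) = if g = e then (Fintype.card Q : ℂ) else 0) ∧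
      Function.Injective ρ :=
  stmt7_general (Nat.cast_ne_zero.mpr Fintype.card_ne_zero) he (hρu e)
    (isSynchronizedFactorization_iff_Tmod.mpr hT)
end

section
/- Let (Q,∘) be a finite quasigroup admitting a unitary collinear factorization. Then (Q,∘) is isotopic to a group: there exists a group structure ⋆ on Q and bijections φ, ψ, χ : Q → Q such that χ(a∘b) = φ(a) ⋆ ψ(b) for all a, b ∈ Q. -/
open Matrix BigOperators

/-- `op` is isotopic to a group structure on `Q`: there is a group operation `m`
on `Q` and bijections φ, ψ, χ with χ(a∘b) = φ(a) ⋆ ψ(b). -/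
def IsotopicToGroup {Q : Type*} (op : Q → Q → Q) : Prop :=
  ∃ m : Q → Q → Q,
    (∀ x y z : Q, m (m x y) z = m x (m y z)) ∧
    (∃ e : Q, (∀ x, m e x = x ∧ m x e = x) ∧ ∀ x, ∃ y, m x y = e ∧ m y x = e) ∧
    ∃ φ ψ χ : Q → Q, Function.Bijective φ ∧ Function.Bijective ψ ∧
      Function.Bijective χ ∧ ∀ a b, χ (op a b) = m (φ a) (ψ b)

/-! In a unitary collinear factorization `A a * B b = (C (a ∘ b))⁻¹` holds in the unitary group, and
`c ↦ C c` is injective because the trace separates slices. So everything happens inside a group: if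
`f a * g b = h (a ∘ b)` with `h` injective, then for any base point `e` the normalized map
`p x = h x * (h (e ∘ e))⁻¹` satisfies `p (a ∘ b) = p (a ∘ e) * p (e ∘ b)`. Since translations are
onto, the range of `p` is a subgroup, and this identity is an isotopy from `∘` onto it. -/

theorem isotopicToGroup_of_equiv {Q G : Type*} [Group G] {op : Q → Q → Q} (φ ψ χ : Q ≃ G)
    (hop : ∀ a b, χ (op a b) = φ a * ψ b) : IsotopicToGroup op := by
  refine ⟨fun x y => χ.symm (χ x * χ y), fun x y z => ?assoc,
    ⟨χ.symm 1, fun x => ?unit, fun x => ⟨χ.symm (χ x)⁻¹, ?inv⟩⟩,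
    φ.trans χ.symm, ψ.trans χ.symm, id, Equiv.bijective _, Equiv.bijective _,
    Function.bijective_id, fun a b => ?isotopy⟩
  case assoc => simp [mul_assoc]
  case unit => simp
  case inv => simp
  case isotopy => simp [← hop]

section BasedMap

variable {Q G : Type*} [Group G] {op : Q → Q → Q} {e : Q} {p : Q → G}

theorem map_op_self_eq_one (hp : ∀ a b, p (op a b) = p (op a e) * p (op e b)) :
    p (op e e) = 1 :=
  left_eq_mul.mp (hp e e)

/-- The range of a map `p` into a group with `p (a ∘ b) = p (a ∘ e) * p (e ∘ b)`, as a subgroup. It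
is the group to which a quasigroup is shown to be isotopic. -/
def rangeSubgroup (hL : ∀ a, Function.Surjective fun x => op a x)
    (hR : Function.Surjective fun x => op x e)
    (hp : ∀ a b, p (op a b) = p (op a e) * p (op e b)) : Subgroup G where
  carrier := Set.range p
  one_mem' := ⟨op e e, map_op_self_eq_one hp⟩
  mul_mem' := by
    rintro _ _ ⟨x, rfl⟩ ⟨y, rfl⟩
    obtain ⟨a, rfl⟩ := hR x
    obtain ⟨b, rfl⟩ := hL e y
    exact ⟨op a b, hp a b⟩
  inv_mem' := by
    rintro _ ⟨x, rfl⟩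
    obtain ⟨a, rfl⟩ := hR x
    obtain ⟨b, hb : op a b = op e e⟩ := hL a (op e e)
    have hab : p (op a e) * p (op e b) = 1 := by
      rw [← hp, hb, map_op_self_eq_one hp]
    exact ⟨op e b, (inv_eq_of_mul_eq_one_right hab).symm⟩

theorem isotopicToGroup_of_map_op (hL : ∀ a, Function.Bijective fun x => op a x)
    (hR : ∀ b, Function.Bijective fun x => op x b) (hinj : Function.Injective p)
    (hp : ∀ a b, p (op a b) = p (op a e) * p (op e b)) : IsotopicToGroup op :=
  let χ : Q ≃ rangeSubgroup (fun a => (hL a).surjective) (hR e).surjective hp :=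
    Equiv.ofInjective p hinj
  isotopicToGroup_of_equiv ((Equiv.ofBijective _ (hR e)).trans χ)
    ((Equiv.ofBijective _ (hL e)).trans χ) χ fun a b => Subtype.ext (hp a b)

end BasedMap

theorem isotopicToGroup_of_mul_eq {Q G : Type*} [Nonempty Q] [Group G] {op : Q → Q → Q}
    (hL : ∀ a, Function.Bijective fun x => op a x)
    (hR : ∀ b, Function.Bijective fun x => op x b)
    {f g h : Q → G} (hinj : Function.Injective h) (hmul : ∀ a b, f a * g b = h (op a b)) :
    IsotopicToGroup op := by
  obtain ⟨e⟩ := ‹Nonempty Q›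
  refine isotopicToGroup_of_map_op (e := e) (p := fun x => h x * (h (op e e))⁻¹) hL hR
    ((mul_left_injective _).comp hinj) fun a b => ?_
  simp only [← hmul]
  group

theorem injective_of_apply_mul_eq_ite {Q R S : Type*} [DecidableEq Q] [Mul R] [Zero S] [One S]
    [NeZero (1 : S)] {op : Q → Q → Q} (hop : ∀ c, ∃ a b, op a b = c) {τ : R → S} {A B C : Q → R}
    (hτ : ∀ a b c, τ (A a * B b * C c) = if op a b = c then 1 else 0) :
    Function.Injective C := by
  intro c c' hC
  obtain ⟨a, b, rfl⟩ := hop c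
  have hite : (if op a b = c' then 1 else 0 : S) = 1 := by
    rw [← hτ, ← hC, hτ, if_pos rfl]
  by_contra hne
  exact zero_ne_one ((if_neg hne).symm.trans hite)

/-- `τ` stands for the normalized trace, in a possibly infinite-dimensional algebra `R`. -/
theorem stmt9_general {Q R S : Type*} [DecidableEq Q] [Nonempty Q] [Monoid R] [StarMul R]
    [Zero S] [One S] [NeZero (1 : S)]
    (op : Q → Q → Q)
    (hL : ∀ a : Q, Function.Bijective fun x => op a x)
    (hR : ∀ b : Q, Function.Bijective fun x => op x b)
    (τ : R → S)
    (hUCF : ∃ A B C : Q → R,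
      (∀ a, A a ∈ unitary R) ∧
      (∀ b, B b ∈ unitary R) ∧
      (∀ c, C c ∈ unitary R) ∧
      (∀ a b c, τ (A a * B b * C c) = if op a b = c then 1 else 0) ∧
      (∀ a b c, op a b = c → A a * B b = star (C c))) :
    IsotopicToGroup op := by
  obtain ⟨A, B, C, hA, hB, hC, hτ, hcol⟩ := hUCF
  have hop : ∀ c, ∃ a b, op a b = c := fun c => ⟨c, (hL c).surjective c⟩
  have hCinj : Function.Injective fun c => (⟨C c, hC c⟩ : unitary R) := fun _ _ h =>
    injective_of_apply_mul_eq_ite hop hτ (congrArg Subtype.val h)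
  exact isotopicToGroup_of_mul_eq hL hR (f := fun a => (⟨A a, hA a⟩ : unitary R))
    (g := fun b => ⟨B b, hB b⟩) (inv_injective.comp hCinj)
    fun a b => Subtype.ext (hcol a b _ rfl)

/-- a finite quasigroup admitting a unitary collinear factorization
is isotopic to a group. -/
theorem stmt9 {Q : Type*} [Fintype Q] [DecidableEq Q] [Nonempty Q]
    (op : Q → Q → Q)
    (hL : ∀ a : Q, Function.Bijective fun x => op a x)
    (hR : ∀ b : Q, Function.Bijective fun x => op x b)
    (hUCF : ∃ A B C : Q → Matrix Q Q ℂ,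
      (∀ a, A a ∈ Matrix.unitaryGroup Q ℂ) ∧
      (∀ b, B b ∈ Matrix.unitaryGroup Q ℂ) ∧
      (∀ c, C c ∈ Matrix.unitaryGroup Q ℂ) ∧
      (∀ a b c, Tmod A B C a b c = if op a b = c then 1 else 0) ∧
      (∀ a b c, op a b = c → A a * B b = (C c)ᴴ)) :
    IsotopicToGroup op :=
  stmt9_general op hL hR (fun M => 1 / (Fintype.card Q : ℂ) * Matrix.trace M) hUCF
end
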